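/- Let f: [0,∞) → [0,∞) be continuous with compact support and f(0) = 0. Then the quotient metric space (T^f, d^f), rooted at the equivalence class of 0, is a compact rooted real tree: the semi-metric d^f(s,t) = f(s)+f(t) − 2 inf_{u ∈ [s∧t, s∨t]} f(u) induces a metric on the quotient T^f = [0,σ^f]/∼ (s ∼ t iff d^f(s,t)=0), and this metric space is compact and satisfies the defining properties of a real tree (unique isometric arcs between any two points, and every injective continuous path between two points has the arc as its range). -/

import Mathlib

/-!
The semi-metric `d^f` satisfies the four-point condition
`d(x,y) + d(z,w) ≤ max (d(x,z) + d(y,w)) (d(x,w) + d(y,z))`: writing `m(s,t)` for the infimum of `f`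
between `s` and `t`, this reduces to `m(s,u) ≥ min (m(s,t)) (m(t,u))`, which holds because the interval
between `s` and `u` is covered by those between `s` and `t` and between `t` and `u`. The projection
`[0, σ^f] → T^f` is continuous, so `T^f` is compact and connected. It remains to see that a connected
metric space with the four-point condition is a real tree.

The heart of this is `IsFourPoint.crossing`: a connected set `S` containing `s` and `t` contains, for
each `r ∈ [0, d(s,t)]`, a point `x` with `d(s,x) = r` and `d(x,t) = d(s,t) - r`. By the four-point
condition, `x ↦ d(x,s) - d(x,t)` is locally constant away from the points between `s` and `t`,
so if no such `x` existed, `{x ∈ S | d(x,s) - d(x,t) < 2r - d(s,t)}` would be clopen in `S`.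
Such an `x` is unique, again by the four-point condition, and depends isometrically on `r`. Taking
`S` to be the whole space gives the unique isometric arc; taking `S` to be the range of a path `q` from
`s` to `t` shows that this arc lies in the range of `q`. Conversely, for a point `y = q τ`, the
projection `p` of `y` to the arc lies between `s` and `y` and between `y` and `t`, so both
`q([0,τ])` and `q([τ,1])` contain `p`; injectivity of `q` forces `p = y`.
-/

open Metric Set

/-- The lifetime `σ^f = sup{t : f(t) > 0}` of an excursion `f` (with `sup ∅ = 0`). -/
noncomputable def sigmaF (f : ℝ → ℝ) : ℝ := sSup {t : ℝ | 0 < f t}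

/-- The tree semi-metric coded by `f`:
`d^f(s,t) = f(s) + f(t) - 2 inf_{u ∈ [s∧t, s∨t]} f(u)`. -/
noncomputable def treeDist (f : ℝ → ℝ) (s t : ℝ) : ℝ :=
  f s + f t - 2 * sInf (f '' Set.Icc (min s t) (max s t))

/-- The relation on `[0, σ^f]` identifying points at `d^f`-distance zero. -/
def TRel (f : ℝ → ℝ) : Set.Icc (0:ℝ) (sigmaF f) → Set.Icc (0:ℝ) (sigmaF f) → Prop :=
  fun s t => treeDist f s.1 t.1 = 0

/-- The quotient `T^f = [0,σ^f]/∼` of `[0,σ^f]` by the relation `d^f(s,t) = 0`. -/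
def TQuot (f : ℝ → ℝ) : Type := Quot (TRel f)

/-- A metric space is a real tree if between any two points there is a unique isometric
arc, and any injective continuous path between two points has this arc as its range. -/
def IsRealTree (E : Type*) [MetricSpace E] : Prop :=
  (∀ s t : E, ∃! f : Set.Icc (0:ℝ) (dist s t) → E,
      Isometry f ∧ (∀ z : Set.Icc (0:ℝ) (dist s t), (z : ℝ) = 0 → f z = s) ∧
        (∀ z : Set.Icc (0:ℝ) (dist s t), (z : ℝ) = dist s t → f z = t)) ∧
  (∀ s t : E, ∀ q : Set.Icc (0:ℝ) 1 → E, Continuous q → Function.Injective q →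
      (∀ z : Set.Icc (0:ℝ) 1, (z : ℝ) = 0 → q z = s) →
      (∀ z : Set.Icc (0:ℝ) 1, (z : ℝ) = 1 → q z = t) →
      ∀ f : Set.Icc (0:ℝ) (dist s t) → E, Isometry f →
        (∀ z : Set.Icc (0:ℝ) (dist s t), (z : ℝ) = 0 → f z = s) →
        (∀ z : Set.Icc (0:ℝ) (dist s t), (z : ℝ) = dist s t → f z = t) →
        Set.range q = Set.range f)

/-- The distance function of a bundled metric space structure. -/
noncomputable def mdist {A : Type*} (m : MetricSpace A) : A → A → ℝ :=
  letI := m; dist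

/-- Compactness w.r.t. a bundled metric space structure. -/
def MSCompact {A : Type*} (m : MetricSpace A) : Prop := letI := m; CompactSpace A

/-- Being a real tree w.r.t. a bundled metric space structure. -/
def MSRealTree {A : Type*} (m : MetricSpace A) : Prop := letI := m; IsRealTree A

/-! ### Metric spaces with the four-point condition -/

/-- The four-point condition (`0`-hyperbolicity): among the three ways of pairing four points and
adding the two distances, none exceeds the maximum of the other two. -/
def IsFourPoint (E : Type*) [MetricSpace E] : Prop :=
  ∀ x y z w : E, dist x y + dist z w ≤ max (dist x z + dist y w) (dist x w + dist y z)

namespace IsFourPoint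

variable {E : Type*} [MetricSpace E]

/-- `dist · s - dist · t` is constant on the ball around `x` whose radius is the distance from `x`
to the (possibly missing) segment between `s` and `t`. -/
lemma sub_eq (h : IsFourPoint E) {s t x y : E}
    (hxy : 2 * dist x y < dist x s + dist x t - dist s t) :
    dist y s - dist y t = dist x s - dist x t := by
  have h1 := h x s y t
  have h2 := h x t y s
  have a1 := dist_triangle x y s
  have a2 := dist_triangle x y t
  simp only [dist_comm s y, dist_comm t y, dist_comm t s] at h1 h2
  rcases le_max_iff.1 h1 with h1 | h1 <;> rcases le_max_iff.1 h2 with h2 | h2 <;> linarith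

lemma crossing (h : IsFourPoint E) {S : Set E} (hS : IsPreconnected S) {s t : E}
    (hs : s ∈ S) (ht : t ∈ S) {r : ℝ} (h0 : 0 ≤ r) (h1 : r ≤ dist s t) :
    ∃ x ∈ S, dist s x = r ∧ dist x t = dist s t - r := by
  by_contra! hno
  have hc : Continuous fun x : E => dist x s - dist x t := by fun_prop
  have key : ∀ x ∈ S, 2 * r - dist s t ≤ dist x s - dist x t →
      x ∈ interior {x : E | 2 * r - dist s t ≤ dist x s - dist x t} := by
    intro x hx hle
    rcases hle.lt_or_eq with hlt | heq
    · exact mem_interior_iff_mem_nhds.2 (Filter.mem_of_superset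
        ((isOpen_lt continuous_const hc).mem_nhds hlt) fun _ => le_of_lt (α := ℝ))
    · have he : 0 < dist x s + dist x t - dist s t := by
        have tri := dist_triangle s x t
        rw [dist_comm s x] at tri
        refine lt_of_le_of_ne (by linarith) fun h' => hno x hx ?_ ?_
        · rw [dist_comm]; linarith
        · linarith
      rw [mem_interior_iff_mem_nhds, Metric.mem_nhds_iff]
      refine ⟨(dist x s + dist x t - dist s t) / 2, by linarith, fun y hy => ?_⟩
      rw [Metric.mem_ball, dist_comm] at hy
      have := h.sub_eq (s := s) (t := t) (x := x) (y := y) (by linarith)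
      simp only [Set.mem_ofPred_eq]
      linarith
  obtain ⟨x, -, hx1, hx2⟩ := hS {x | dist x s - dist x t < 2 * r - dist s t}
    (interior {x | 2 * r - dist s t ≤ dist x s - dist x t})
    (isOpen_lt hc continuous_const) isOpen_interior
    (fun x hx => (lt_or_ge (dist x s - dist x t) (2 * r - dist s t)).imp id (key x hx))
    ⟨s, hs, by
      simp only [Set.mem_ofPred_eq, dist_self]
      have : r ≠ 0 := fun h' => hno s hs (by simp [h']) (by simp [h'])
      have : 0 < r := lt_of_le_of_ne h0 this.symm
      linarith⟩
    ⟨t, ht, key t ht (by rw [dist_self, dist_comm t s]; linarith)⟩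
  have := interior_subset hx2
  simp only [Set.mem_ofPred_eq] at this hx1
  linarith

lemma dist_le (h : IsFourPoint E) {s t x y : E} {a b : ℝ}
    (hx : dist s x = a) (hx' : dist x t = dist s t - a)
    (hy : dist s y = b) (hy' : dist y t = dist s t - b) : dist x y ≤ |a - b| := by
  have := h x y s t
  rw [dist_comm x s, dist_comm y s, hx, hx', hy, hy'] at this
  rcases le_max_iff.1 this with h' | h'
  · linarith [le_abs_self (a - b)]
  · linarith [neg_abs_le (a - b)]

lemma eq_of_dist (h : IsFourPoint E) {s t x y : E} {a : ℝ}
    (hx : dist s x = a) (hx' : dist x t = dist s t - a)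
    (hy : dist s y = a) (hy' : dist y t = dist s t - a) : x = y :=
  dist_le_zero.1 (by simpa using h.dist_le hx hx' hy hy')

/-- The projection of `y` to a segment `[s, t]`: the point common to `[s, t]`, `[s, y]`, `[y, t]`. -/
lemma exists_median (h : IsFourPoint E) (hE : IsPreconnected (Set.univ : Set E)) (s t y : E) :
    ∃ p, dist s p + dist p t = dist s t ∧ dist s p + dist p y = dist s y ∧
      dist y p + dist p t = dist y t := by
  have t1 := dist_triangle s y t
  have t2 := dist_triangle y s t
  have t3 := dist_triangle s t y
  rw [dist_comm y s] at t2
  rw [dist_comm t y] at t3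
  obtain ⟨p, -, hp, hp'⟩ := h.crossing hE (Set.mem_univ s) (Set.mem_univ t)
    (r := (dist s y + dist s t - dist y t) / 2) (by linarith) (by linarith)
  have h4 := h y p s t
  have u1 := dist_triangle s p y
  have u2 := dist_triangle y p t
  rw [dist_comm y s, dist_comm p s, dist_comm y p] at h4
  rw [dist_comm y p] at u2
  refine ⟨p, by linarith, ?_, ?_⟩
  · rcases le_max_iff.1 h4 with h' | h' <;> linarith
  · rw [dist_comm y p]
    rcases le_max_iff.1 h4 with h' | h' <;> linarith

theorem isRealTree (h : IsFourPoint E) (hE : IsPreconnected (Set.univ : Set E)) :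
    IsRealTree E := by
  have iso : ∀ s t : E, ∀ g : Set.Icc (0:ℝ) (dist s t) → E, Isometry g →
      (∀ z : Set.Icc (0:ℝ) (dist s t), (z : ℝ) = 0 → g z = s) →
      (∀ z : Set.Icc (0:ℝ) (dist s t), (z : ℝ) = dist s t → g z = t) →
      ∀ z, dist s (g z) = z ∧ dist (g z) t = dist s t - z := by
    intro s t g hg h0 h1 z
    have e0 := hg.dist_eq ⟨0, le_rfl, dist_nonneg⟩ z
    have e1 := hg.dist_eq z ⟨dist s t, dist_nonneg, le_rfl⟩
    rw [h0 ⟨0, le_rfl, dist_nonneg⟩ rfl, Subtype.dist_eq, Real.dist_eq] at e0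
    rw [h1 ⟨dist s t, dist_nonneg, le_rfl⟩ rfl, Subtype.dist_eq, Real.dist_eq] at e1
    have := z.2.1
    have := z.2.2
    rw [e0, e1, abs_of_nonpos (by simpa), abs_of_nonpos (by simpa)]
    simp
  refine ⟨fun s t => ?_, fun s t q hq hinj hq0 hq1 g hg hg0 hg1 => ?_⟩
  · have ex : ∀ z : Set.Icc (0:ℝ) (dist s t), ∃ x, dist s x = z ∧ dist x t = dist s t - z := by
      intro z
      obtain ⟨x, -, hx⟩ := h.crossing hE (Set.mem_univ s) (Set.mem_univ t) z.2.1 z.2.2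
      exact ⟨x, hx⟩
    choose g hg hg' using ex
    refine ⟨g, ⟨Isometry.of_dist_eq fun a b => ?_, fun z hz => ?_, fun z hz => ?_⟩, ?_⟩
    · rw [Subtype.dist_eq, Real.dist_eq]
      refine le_antisymm (h.dist_le (hg a) (hg' a) (hg b) (hg' b)) ?_
      rw [← hg a, ← hg b, dist_comm s, dist_comm s]
      exact abs_dist_sub_le _ _ _
    · exact (dist_eq_zero.1 ((hg z).trans hz)).symm
    · exact dist_eq_zero.1 (by rw [hg' z, hz, sub_self])
    · rintro g' ⟨hi, h0, h1⟩
      funext z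
      obtain ⟨a, b⟩ := iso s t g' hi h0 h1 z
      exact h.eq_of_dist a b (hg z) (hg' z)
  · have hz := iso s t g hg hg0 hg1
    have q0 : q 0 = s := hq0 0 rfl
    have q1 : q 1 = t := hq1 1 rfl
    apply Set.Subset.antisymm
    · rintro _ ⟨τ, rfl⟩
      obtain ⟨p, p1, p2, p3⟩ := h.exists_median hE s t (q τ)
      have c1 : IsPreconnected (q '' Set.Iic τ) :=
        isPreconnected_Iic.image q hq.continuousOn
      have c2 : IsPreconnected (q '' Set.Ici τ) :=
        isPreconnected_Ici.image q hq.continuousOn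
      obtain ⟨_, ⟨a, ha, rfl⟩, a1, a2⟩ := h.crossing c1 ⟨0, τ.2.1, q0⟩ ⟨τ, le_refl τ, rfl⟩
        (r := dist s p) dist_nonneg (by linarith [dist_nonneg (x := p) (y := q τ)])
      obtain ⟨_, ⟨b, hb, rfl⟩, b1, b2⟩ := h.crossing c2 ⟨τ, le_refl τ, rfl⟩ ⟨1, τ.2.2, q1⟩
        (r := dist (q τ) p) dist_nonneg (by linarith [dist_nonneg (x := p) (y := t)])
      have ea : q a = p := h.eq_of_dist a1 a2 rfl (by linarith)
      have eb : q b = p := h.eq_of_dist b1 b2 rfl (by linarith)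
      have hab : a = b := hinj (ea.trans eb.symm)
      have haτ : a = τ := le_antisymm ha (hab ▸ hb)
      rw [← haτ, ea]
      refine ⟨⟨dist s p, dist_nonneg, by linarith [dist_nonneg (x := p) (y := t)]⟩, ?_⟩
      exact h.eq_of_dist (hz _).1 (hz _).2 rfl (by simp only; linarith)
    · rintro _ ⟨z, rfl⟩
      obtain ⟨x, hx, x1, x2⟩ := h.crossing (isPreconnected_range hq) ⟨0, q0⟩ ⟨1, q1⟩ z.2.1 z.2.2
      rwa [h.eq_of_dist (hz z).1 (hz z).2 x1 x2]

end IsFourPoint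

/-! ### The coding semi-metric -/

/-- The infimum `m(s,t)` of `f` over the interval between `s` and `t`. -/
noncomputable def infBetween (f : ℝ → ℝ) (s t : ℝ) : ℝ :=
  sInf (f '' Set.Icc (min s t) (max s t))

lemma treeDist_eq (f : ℝ → ℝ) (s t : ℝ) :
    treeDist f s t = f s + f t - 2 * infBetween f s t := rfl

lemma infBetween_comm (f : ℝ → ℝ) (s t : ℝ) : infBetween f s t = infBetween f t s := by
  simp only [infBetween, min_comm s t, max_comm s t]

lemma infBetween_le {f : ℝ → ℝ} (hf : ∀ t, 0 ≤ f t) {s t u : ℝ} (hu : u ∈ Set.uIcc s t) :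
    infBetween f s t ≤ f u :=
  csInf_le ⟨0, by rintro _ ⟨v, -, rfl⟩; exact hf v⟩ ⟨u, hu, rfl⟩

lemma le_infBetween {f : ℝ → ℝ} {s t a : ℝ} (h : ∀ u ∈ Set.uIcc s t, a ≤ f u) :
    a ≤ infBetween f s t :=
  le_csInf (Set.Nonempty.image f ⟨s, Set.left_mem_uIcc⟩) (by rintro _ ⟨u, hu, rfl⟩; exact h u hu)

lemma min_le_infBetween {f : ℝ → ℝ} (hf : ∀ t, 0 ≤ f t) (s t u : ℝ) :
    min (infBetween f s t) (infBetween f t u) ≤ infBetween f s u := by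
  refine le_infBetween fun v hv => ?_
  rcases Set.uIcc_subset_uIcc_union_uIcc (b := t) hv with h | h
  · exact min_le_of_left_le (infBetween_le hf h)
  · exact min_le_of_right_le (infBetween_le hf h)

lemma treeDist_self (f : ℝ → ℝ) (s : ℝ) : treeDist f s s = 0 := by
  simp [treeDist]; ring

lemma treeDist_comm (f : ℝ → ℝ) (s t : ℝ) : treeDist f s t = treeDist f t s := by
  rw [treeDist_eq, treeDist_eq, infBetween_comm]; ring

lemma treeDist_fourPoint {f : ℝ → ℝ} (hf : ∀ t, 0 ≤ f t) (x y z w : ℝ) :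
    treeDist f x y + treeDist f z w ≤
      max (treeDist f x z + treeDist f y w) (treeDist f x w + treeDist f y z) := by
  have key : min (infBetween f x z + infBetween f y w) (infBetween f x w + infBetween f y z) ≤
      infBetween f x y + infBetween f z w := by
    have a1 := min_le_infBetween hf x z y
    have a2 := min_le_infBetween hf x w y
    have a3 := min_le_infBetween hf z x w
    have a4 := min_le_infBetween hf z y w
    rw [infBetween_comm f z y] at a1 a4
    rw [infBetween_comm f w y] at a2
    rw [infBetween_comm f z x] at a3
    grind
  simp only [treeDist_eq]
  rcases min_le_iff.1 key with h | h
  · exact le_max_of_le_left (by linarith)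
  · exact le_max_of_le_right (by linarith)

/-- The triangle inequality is the degenerate case of the four-point condition. -/
lemma treeDist_triangle {f : ℝ → ℝ} (hf : ∀ t, 0 ≤ f t) (x y z : ℝ) :
    treeDist f x z ≤ treeDist f x y + treeDist f y z := by
  have := treeDist_fourPoint hf x z y y
  rw [treeDist_self, treeDist_comm f z y] at this
  simpa using this

lemma treeDist_congr {f : ℝ → ℝ} (hf : ∀ t, 0 ≤ f t) {s t : ℝ} (h : treeDist f s t = 0) (u : ℝ) :
    treeDist f s u = treeDist f t u := by
  have h1 := treeDist_triangle hf s t u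
  have h2 := treeDist_triangle hf t s u
  rw [treeDist_comm f t s] at h2
  linarith

lemma exists_treeDist_lt {f : ℝ → ℝ} (hc : Continuous f) (s : ℝ)
    {ε : ℝ} (hε : 0 < ε) : ∃ δ > 0, ∀ t, dist t s < δ → treeDist f t s < ε := by
  obtain ⟨δ, hδ, h⟩ := Metric.continuous_iff.1 hc s (ε / 4) (by linarith)
  refine ⟨δ, hδ, fun t ht => ?_⟩
  have hb : f s - ε / 4 ≤ infBetween f t s := le_infBetween fun u hu => by
    have hus : dist u s < δ := by
      refine lt_of_le_of_lt ?_ ht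
      rw [Real.dist_eq, Real.dist_eq, abs_sub_comm u, abs_sub_comm t]
      exact Set.abs_sub_right_of_mem_uIcc hu
    have := (abs_lt.1 (Real.dist_eq _ _ ▸ h u hus)).1
    linarith
  have := (abs_lt.1 (Real.dist_eq _ _ ▸ h t ht)).2
  rw [treeDist_eq]
  linarith

/-! ### The coded tree -/

/-- The quotient metric on `T^f` induced by `d^f`. -/
@[reducible]
noncomputable def treeMetric (f : ℝ → ℝ) (hf : ∀ t, 0 ≤ f t) : MetricSpace (TQuot f) where
  dist := Quot.lift₂ (fun s t => treeDist f s.1 t.1)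
    (fun a b c h => by
      rw [treeDist_comm f a.1, treeDist_comm f a.1]
      exact treeDist_congr hf h _)
    (fun a b c h => treeDist_congr hf h _)
  dist_self := by rintro ⟨x⟩; exact treeDist_self f x.1
  dist_comm := by rintro ⟨x⟩ ⟨y⟩; exact treeDist_comm f x.1 y.1
  dist_triangle := by rintro ⟨x⟩ ⟨y⟩ ⟨z⟩; exact treeDist_triangle hf x.1 y.1 z.1
  eq_of_dist_eq_zero := by rintro ⟨x⟩ ⟨y⟩ h; exact Quot.sound h

/-- For a continuous, non-negative, compactly supported `f` vanishing on `(-∞,0]`, the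
quotient `T^f = [0,σ^f]/∼`, rooted at the class of `0` (which exists since `0 ≤ σ^f`),
carries a metric induced by the semi-metric `d^f`, and with it `T^f` is a compact
rooted real tree. -/
theorem codedTree_isCompactRealTree (f : ℝ → ℝ) (hcont : Continuous f)
    (hnonneg : ∀ t, 0 ≤ f t) (hzero : ∀ t ≤ 0, f t = 0) (hsupp : HasCompactSupport f) :
    0 ≤ sigmaF f ∧
    ∃ m : MetricSpace (TQuot f),
      (∀ s t : Set.Icc (0:ℝ) (sigmaF f),
        mdist m (Quot.mk (TRel f) s) (Quot.mk (TRel f) t) = treeDist f s.1 t.1) ∧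
      MSCompact m ∧ MSRealTree m := by
  -- With the convention `sSup ∅ = 0` this also covers `f = 0`.
  have hσ : 0 ≤ sigmaF f := Real.sSup_nonneg fun t ht => by
    by_contra! hlt
    exact (ne_of_gt ht) (hzero t hlt.le)
  refine ⟨hσ, treeMetric f hnonneg, fun s t => rfl, ?_⟩
  let _ := treeMetric f hnonneg
  let π : Set.Icc (0:ℝ) (sigmaF f) → TQuot f := Quot.mk (TRel f)
  have hmk : Continuous π := by
    refine Metric.continuous_iff.2 fun s ε hε => ?_
    obtain ⟨δ, hδ, h⟩ := exists_treeDist_lt hcont s.1 hε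
    exact ⟨δ, hδ, fun t ht => h t.1 ht⟩
  have hsurj : Function.Surjective π := Quot.mk_surjective
  refine ⟨hsurj.compactSpace hmk, IsFourPoint.isRealTree ?_ ?_⟩
  · rintro ⟨x⟩ ⟨y⟩ ⟨z⟩ ⟨w⟩
    exact treeDist_fourPoint hnonneg x.1 y.1 z.1 w.1
  · have : PreconnectedSpace (Set.Icc (0:ℝ) (sigmaF f)) :=
      isPreconnected_iff_preconnectedSpace.1 isPreconnected_Icc
    rw [← hsurj.range_eq]
    exact isPreconnected_range hmk
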